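/- (Brézis–Lieb lemma for the nonlocal Riesz term.) Let Ω ⊆ G, N ≥ 3, α ∈ (0, N), p ≥ 1, and let {u_n} be a sequence uniformly bounded in ℓ^{2Np/(N+α)}(G) that converges pointwise on G to a function u. Then lim_{n→∞} ( ∑_{x∈Ω} (R_α ∗ |u_n|^p)(x)|u_n(x)|^p − ∑_{x∈Ω} (R_α ∗ |u_n−u|^p)(x)|u_n(x)−u(x)|^p ) = ∑_{x∈Ω} (R_α ∗ |u|^p)(x)|u(x)|^p. -/

import Mathlib

open Filter Topology

noncomputable section

namespace Choquard

variable {G : Type*}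

/-- The word metric on the Cayley graph of `(G, S)`: the least `k` such that
`y = x * s₁ * ⋯ * s_k` with each `sᵢ ∈ S`. -/
def wordDist [Group G] (S : Finset G) (x y : G) : ℕ :=
  sInf {k : ℕ | ∃ l : List G, (∀ s ∈ l, s ∈ S) ∧ l.length = k ∧ y = x * l.prod}

/-- Convolution against a kernel: `(R ∗ f)(x) = ∑_{y ∈ G} R(x,y) f(y)`. -/
def conv (R : G → G → ℝ) (f : G → ℝ) (x : G) : ℝ := ∑' y, R x y * f y

/-- The `ℓ^q(G)` norm of `u`. -/
def lpNorm (q : ℝ) (u : G → ℝ) : ℝ := (∑' x, |u x| ^ q) ^ (1 / q)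

/-- `u ∈ ℓ^q(G)`. -/
def Memlp (q : ℝ) (u : G → ℝ) : Prop := Summable fun x : G => |u x| ^ q

/-- `|∇u(x)|_p^p = ∑_{y ∼ x} |u(y) − u(x)|^p`, where `y ∼ x` iff `y = x * s`, `s ∈ S`. -/
def gradP [Group G] (S : Finset G) (p : ℝ) (u : G → ℝ) (x : G) : ℝ :=
  ∑ s ∈ S, |u (x * s) - u x| ^ p

/-- The `D^{1,p}` norm `(∑_x ∑_{y ∼ x} |u(y) − u(x)|^p)^{1/p}`. -/
def D1Norm [Group G] (S : Finset G) (p : ℝ) (u : G → ℝ) : ℝ :=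
  (∑' x, gradP S p u x) ^ (1 / p)

/-- `u ∈ D^{1,p}(G) = {u ∈ ℓ^{Np/(N−p)}(G) : ‖u‖_{D^{1,p}} < ∞}`. -/
def MemD1p [Group G] (S : Finset G) (N : ℕ) (p : ℝ) (u : G → ℝ) : Prop :=
  Memlp ((N : ℝ) * p / ((N : ℝ) - p)) u ∧ Summable (gradP S p u)

/-- `|∇u(x)|₂² = ∑_{y ∼ x} (u(y) − u(x))²`. -/
def gradSq [Group G] (S : Finset G) (u : G → ℝ) (x : G) : ℝ :=
  ∑ s ∈ S, (u (x * s) - u x) ^ 2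

/-- The `D^{1,2}` norm. -/
def D12Norm [Group G] (S : Finset G) (u : G → ℝ) : ℝ :=
  (∑' x, gradSq S u x) ^ ((1 : ℝ) / 2)

/-- `u ∈ D^{1,2}(G) = {u ∈ ℓ^{2N/(N−2)}(G) : ‖u‖_{D^{1,2}} < ∞}`. -/
def MemD12 [Group G] (S : Finset G) (N : ℕ) (u : G → ℝ) : Prop :=
  Memlp (2 * (N : ℝ) / ((N : ℝ) - 2)) u ∧ Summable (gradSq S u)

/-- The graph Laplacian `Δu(x) = ∑_{y ∼ x} (u(y) − u(x))`. -/
def lap [Group G] (S : Finset G) (u : G → ℝ) (x : G) : ℝ :=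
  ∑ s ∈ S, (u (x * s) - u x)

/-- `u ∈ D^{2,2}(G) = {u ∈ ℓ^{2N/(N−4)}(G) : ‖Δu‖_{ℓ²} < ∞}`. -/
def MemD22 [Group G] (S : Finset G) (N : ℕ) (u : G → ℝ) : Prop :=
  Memlp (2 * (N : ℝ) / ((N : ℝ) - 4)) u ∧ Summable fun x => (lap S u x) ^ 2

/-- `u ∈ D^{2,p}(G) = {u ∈ ℓ^{Np/(N−2p)}(G) : ‖Δu‖_{ℓ^p} < ∞}`. -/
def MemD2p [Group G] (S : Finset G) (N : ℕ) (p : ℝ) (u : G → ℝ) : Prop :=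
  Memlp ((N : ℝ) * p / ((N : ℝ) - 2 * p)) u ∧ Summable fun x => |lap S u x| ^ p

/-- The nonlocal energy `∑_{x ∈ G} (R_α ∗ |u|^p)(x) |u(x)|^p`. -/
def energy (R : G → G → ℝ) (p : ℝ) (u : G → ℝ) : ℝ :=
  ∑' x, conv R (fun y => |u y| ^ p) x * |u x| ^ p

/-- The optimal constant `K` of the Sobolev-type inequality. -/
def bestK [Group G] (S : Finset G) (N : ℕ) (R : G → G → ℝ) (p : ℝ) : ℝ :=
  sSup {t : ℝ | ∃ u : G → ℝ, MemD12 S N u ∧ D12Norm S u = 1 ∧ t = energy R p u}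

/-- The discrete `p`-Laplacian. -/
def pLap [Group G] (S : Finset G) (p : ℝ) (u : G → ℝ) (x : G) : ℝ :=
  ∑ s ∈ S, |u (x * s) - u x| ^ (p - 2) * (u (x * s) - u x)

/-- The cutoff `Ψ_r`, the indicator of `{x : d(x,e) ≥ r + 1}`. -/
def cutoff [Group G] (S : Finset G) (r : ℕ) (x : G) : ℝ :=
  if r + 1 ≤ wordDist S 1 x then 1 else 0

/-!
Put `r = 2D / (D + α)`. By the Hardy–Littlewood–Sobolev inequality the energy of `u` is
`B (|u| ^ p) (|u| ^ p)` for a bounded bilinear form `B` on `ℓ^r`. Let `g n = |u n - v| ^ p` and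
`h n = |u n| ^ p - g n`. The Brezis–Lieb lemma in `ℓ^r` gives `h n → |v| ^ p` in norm, while `g n`,
being bounded and coordinatewise null, tends to zero weakly because `r > 1`. Hence the mixed terms
in the expansion of `B (g n + h n) (g n + h n) - B (g n) (g n)` vanish in the limit.

For the Hardy–Littlewood–Sobolev inequality, take `a` and `b` of unit norm and split the double sum
according to whether `b y ≤ a x`. By symmetry one half suffices, and it is summed row by row: the
sum of `d x y ^ (α - D) * b y` over `{y | b y ≤ t}` is `O(t ^ (r - 1))`, because near `x` one has
`b y ≤ t`, and far from `x` Young's inequality applies. With `t = a x` the rows add up to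
`O(∑ x, a x ^ r)`.
-/

open scoped ENNReal NNReal lp

variable {ι κ : Type*} {l : Filter κ}

section Elementary

-- By homogeneity only the values `φ 1 z` for small `z` and `φ z 1` for bounded `z` matter.
theorem exists_forall_le_mul_abs_rpow_add {φ : ℝ → ℝ → ℝ} {s : ℝ} (hs : 0 < s)
    (hφ : Continuous (Function.uncurry φ))
    (hhom : ∀ t a b, φ (t * a) (t * b) = |t| ^ s * φ a b) (h10 : φ 1 0 ≤ 0) {ε : ℝ} (hε : 0 < ε) :
    ∃ C, 0 ≤ C ∧ ∀ a b, φ a b ≤ ε * |a| ^ s + C * |b| ^ s := by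
  obtain ⟨δ, hδ, hsmall⟩ : ∃ δ > 0, ∀ z, |z| < δ → φ 1 z < ε := by
    have hcont : Tendsto (fun z => φ 1 z) (𝓝 0) (𝓝 (φ 1 0)) :=
      (hφ.comp (Continuous.prodMk_right 1)).tendsto 0
    simpa [Real.dist_eq] using
      Metric.eventually_nhds_iff.1 (hcont.eventually_lt_const (h10.trans_lt hε))
  obtain ⟨C, hC⟩ : BddAbove ((fun z => φ z 1) '' Set.Icc (-δ⁻¹) δ⁻¹) :=
    isCompact_Icc.bddAbove_image (hφ.comp (Continuous.prodMk_left 1)).continuousOn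
  have h00 : φ 0 0 = 0 := by simpa [Real.zero_rpow hs.ne'] using hhom 0 0 0
  refine ⟨max C 0, le_max_right _ _, fun a b => ?_⟩
  rcases lt_or_ge |b| (δ * |a|) with hb | hb
  · have ha : a ≠ 0 := by rintro rfl; simp [(abs_nonneg b).not_gt] at hb
    have hab : φ a b = |a| ^ s * φ 1 (b / a) := by
      rw [← hhom, mul_one, mul_div_cancel₀ _ ha]
    have hφε : φ 1 (b / a) ≤ ε :=
      (hsmall _ (by rwa [abs_div, div_lt_iff₀ (abs_pos.2 ha)])).le
    calc φ a b ≤ |a| ^ s * ε := hab ▸ by gcongr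
      _ ≤ ε * |a| ^ s + max C 0 * |b| ^ s := by
        rw [mul_comm]; exact le_add_of_nonneg_right (by positivity)
  · rcases eq_or_ne b 0 with rfl | hb0
    · obtain rfl : a = 0 := by
        rw [abs_zero] at hb
        exact abs_nonpos_iff.1 (nonpos_of_mul_nonpos_right hb hδ)
      simp [h00, Real.zero_rpow hs.ne']
    · have hab : φ a b = |b| ^ s * φ (a / b) 1 := by
        rw [← hhom, mul_one, mul_div_cancel₀ _ hb0]
      have hφC : φ (a / b) 1 ≤ max C 0 := by
        refine (hC ⟨_, abs_le.1 ?_, rfl⟩).trans (le_max_left _ _)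
        rwa [abs_div, div_le_iff₀ (abs_pos.2 hb0), le_inv_mul_iff₀ hδ]
      calc φ a b ≤ |b| ^ s * max C 0 := hab ▸ by gcongr
        _ ≤ ε * |a| ^ s + max C 0 * |b| ^ s := by
          rw [mul_comm]; exact le_add_of_nonneg_left (by positivity)

theorem exists_abs_add_rpow_le {s : ℝ} (hs : 0 < s) :
    ∃ C, 0 ≤ C ∧ ∀ a b : ℝ, |a + b| ^ s ≤ 2 * |a| ^ s + C * |b| ^ s := by
  obtain ⟨C, hC, h⟩ := exists_forall_le_mul_abs_rpow_add
    (φ := fun a b => |a + b| ^ s - |a| ^ s) hs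
    (by
      have := hs.le
      simp only [Function.uncurry_def]
      fun_prop (disch := simp [this]))
    (fun t a b => by
      rw [← mul_add, abs_mul, abs_mul, Real.mul_rpow (abs_nonneg _) (abs_nonneg _),
        Real.mul_rpow (abs_nonneg _) (abs_nonneg _), mul_sub])
    (by simp) one_pos
  exact ⟨C, hC, fun a b => by linarith [h a b]⟩

theorem exists_abs_rpow_add_sub_sub_rpow_le {p r : ℝ} (hp : 0 < p) (hr : 0 < r) {ε : ℝ}
    (hε : 0 < ε) :
    ∃ C, 0 ≤ C ∧ ∀ a b : ℝ,
      |(|a + b| ^ p - |a| ^ p) - |b| ^ p| ^ r ≤ ε * |a| ^ (p * r) + C * |b| ^ (p * r) := by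
  refine exists_forall_le_mul_abs_rpow_add
    (φ := fun a b => |(|a + b| ^ p - |a| ^ p) - |b| ^ p| ^ r) (mul_pos hp hr) ?_ ?_ ?_ hε
  · have := hp.le
    have := hr.le
    simp only [Function.uncurry_def]
    fun_prop (disch := simp [*])
  · intro t a b
    have hmul (c : ℝ) : |t * c| ^ p = |t| ^ p * |c| ^ p := by
      rw [abs_mul, Real.mul_rpow (abs_nonneg _) (abs_nonneg _)]
    rw [← mul_add, hmul, hmul, hmul, ← mul_sub, ← mul_sub, abs_mul,
      abs_of_nonneg (Real.rpow_nonneg (abs_nonneg t) p),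
      Real.mul_rpow (by positivity) (abs_nonneg _), ← Real.rpow_mul (abs_nonneg t)]
  · simp [Real.zero_rpow hp.ne', Real.zero_rpow hr.ne']

theorem mul_le_rpow_add_inv_mul_rpow {r r' : ℝ} (hr : r.HolderConjugate r') {t : ℝ≥0}
    (ht : 0 < t) (w b : ℝ≥0) : w * b ≤ t ^ (r - 1) * b ^ r + t⁻¹ * w ^ r' := by
  have hexp : 1 / r' * r = r - 1 := by
    rw [one_div_mul_eq_div, div_eq_iff hr.symm.ne_zero, hr.sub_one_mul_conj]
  have hτ : t ^ (1 / r') ≠ 0 := by positivity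
  calc w * b = (t ^ (1 / r') * b) * ((t ^ (1 / r'))⁻¹ * w) := by field_simp
    _ ≤ (t ^ (1 / r') * b) ^ r / r.toNNReal + ((t ^ (1 / r'))⁻¹ * w) ^ r' / r'.toNNReal :=
      NNReal.young_inequality_real _ _ hr
    _ ≤ (t ^ (1 / r') * b) ^ r + ((t ^ (1 / r'))⁻¹ * w) ^ r' :=
      add_le_add (div_le_self zero_le (Real.one_le_toNNReal.2 hr.lt.le))
        (div_le_self zero_le (Real.one_le_toNNReal.2 hr.symm.lt.le))
    _ = t ^ (r - 1) * b ^ r + t⁻¹ * w ^ r' := by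
      rw [NNReal.mul_rpow, NNReal.mul_rpow, NNReal.inv_rpow, ← NNReal.rpow_mul,
        ← NNReal.rpow_mul, hexp, one_div_mul_cancel hr.symm.ne_zero, NNReal.rpow_one]

end Elementary

section Convergence

-- Only the excess of `k` over `ε g` has a fixed summable majorant, so dominated convergence is
-- applied to `(k - ε g)⁺`.
theorem tendsto_tsum_zero_of_forall_le_add {k g : κ → ι → ℝ} {D : ι → ℝ} {T : ℝ}
    (hk : ∀ n x, 0 ≤ k n x) (hg : ∀ n x, 0 ≤ g n x) (hgs : ∀ n, Summable (g n))
    (hgT : ∀ n, ∑' x, g n x ≤ T) (hD : Summable D)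
    (hle : ∀ ε > 0, ∃ C, ∀ n x, k n x ≤ ε * g n x + C * D x)
    (hlim : ∀ x, Tendsto (fun n => k n x) l (𝓝 0)) :
    Tendsto (fun n => ∑' x, k n x) l (𝓝 0) := by
  have hexcess {ε : ℝ} (hε : 0 < ε) :
      (∀ n, Summable fun x => max (k n x - ε * g n x) 0) ∧
        Tendsto (fun n => ∑' x, max (k n x - ε * g n x) 0) l (𝓝 0) := by
    obtain ⟨C, hC⟩ := hle ε hε
    have hmaj n x : ‖max (k n x - ε * g n x) 0‖ ≤ |C * D x| := by
      rw [Real.norm_of_nonneg (le_max_right _ _)]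
      exact max_le ((sub_le_iff_le_add'.2 (hC n x)).trans (le_abs_self _)) (abs_nonneg _)
    have hCD : Summable fun x => |C * D x| := (hD.mul_left C).abs
    refine ⟨fun n => .of_norm_bounded hCD (hmaj n), ?_⟩
    have hlim' x : Tendsto (fun n => max (k n x - ε * g n x) 0) l (𝓝 0) :=
      squeeze_zero (fun n => le_max_right _ _)
        (fun n => max_le (sub_le_self _ (mul_nonneg hε.le (hg n x))) (hk n x)) (hlim x)
    simpa using tendsto_tsum_of_dominated_convergence hCD hlim' (.of_forall hmaj)
  refine tendsto_order.2 ⟨fun a ha => .of_forall fun n => ha.trans_le (tsum_nonneg (hk n)),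
    fun a ha => ?_⟩
  obtain ⟨ε, hε, hεT⟩ : ∃ ε > 0, ε * T < a / 2 := by
    refine ⟨a / 2 / (|T| + 1), by positivity, ?_⟩
    rw [div_mul_eq_mul_div, div_lt_iff₀ (by positivity)]
    exact mul_lt_mul_of_pos_left (by linarith [le_abs_self T]) (half_pos ha)
  obtain ⟨hsum, htend⟩ := hexcess hε
  filter_upwards [htend.eventually_lt_const (half_pos ha)] with n hn
  have hmaj : Summable fun x => ε * g n x + max (k n x - ε * g n x) 0 :=
    ((hgs n).mul_left ε).add (hsum n)
  have hkle x : k n x ≤ ε * g n x + max (k n x - ε * g n x) 0 := by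
    linarith [le_max_left (k n x - ε * g n x) 0]
  calc ∑' x, k n x ≤ ∑' x, (ε * g n x + max (k n x - ε * g n x) 0) :=
        (hmaj.of_nonneg_of_le (hk n) hkle).tsum_le_tsum hkle hmaj
    _ = ε * ∑' x, g n x + ∑' x, max (k n x - ε * g n x) 0 := by
        rw [((hgs n).mul_left ε).tsum_add (hsum n), tsum_mul_left]
    _ ≤ ε * T + ∑' x, max (k n x - ε * g n x) 0 := by gcongr; exact hgT n
    _ < a := by linarith

theorem summable_of_tendsto_of_tsum_le [l.NeBot] {k : κ → ι → ℝ} {w : ι → ℝ} {T : ℝ}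
    (hk : ∀ n x, 0 ≤ k n x) (hks : ∀ n, Summable (k n)) (hkT : ∀ n, ∑' x, k n x ≤ T)
    (hlim : ∀ x, Tendsto (fun n => k n x) l (𝓝 (w x))) :
    Summable w := by
  refine summable_of_sum_le (c := T) (fun x => ge_of_tendsto' (hlim x) fun n => hk n x) fun F => ?_
  exact le_of_tendsto' (tendsto_finsetSum F fun x _ => hlim x) fun n =>
    ((hks n).sum_le_tsum F fun x _ => hk n x).trans (hkT n)

end Convergence

section LpSpace

variable {P : ℝ≥0∞} [Fact (1 ≤ P)] {r' : ℝ}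

theorem summable_abs_apply_single_rpow [DecidableEq ι] (hP : P.toReal.HolderConjugate r')
    (φ : StrongDual ℝ ℓ^P(ι, ℝ)) :
    Summable fun x => |φ (lp.single P x 1)| ^ r' := by
  let c : ι → ℝ := fun x => φ (lp.single P x 1)
  refine summable_of_sum_le (c := ‖φ‖ ^ r') (fun x => by positivity) fun F => ?_
  obtain ⟨⟨g, hg, hgc⟩, -⟩ := NNReal.isGreatest_Lp F (fun x => ‖c x‖₊) hP.symm
  let f : ℓ^P(ι, ℝ) := ∑ x ∈ F, lp.single P x (SignType.sign (c x) * g x : ℝ)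
  have hf : ‖f‖ ≤ 1 := by
    rw [← Real.rpow_le_rpow_iff (norm_nonneg _) zero_le_one hP.pos, Real.one_rpow,
      lp.norm_sum_single hP.pos (fun x => (SignType.sign (c x) * g x : ℝ))]
    refine le_trans (Finset.sum_le_sum fun x _ => ?_) (by exact_mod_cast hg :
      ∑ x ∈ F, (g x : ℝ) ^ P.toReal ≤ 1)
    gcongr
    rw [norm_mul, NNReal.norm_eq]
    refine mul_le_of_le_one_left (g x).2 ?_
    rcases lt_trichotomy (c x) 0 with h | h | h <;> simp [h]
  have hφf : φ f = ∑ x ∈ F, |c x| * g x := by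
    simp only [f, map_sum]
    refine Finset.sum_congr rfl fun x _ => ?_
    rw [← mul_one (_ * _ : ℝ), ← smul_eq_mul, lp.single_smul, map_smul, smul_eq_mul,
      mul_right_comm, sign_mul_self]
  have hsum : (∑ x ∈ F, |c x| ^ r') ^ (1 / r') ≤ ‖φ‖ := by
    calc (∑ x ∈ F, |c x| ^ r') ^ (1 / r') = ∑ x ∈ F, |c x| * g x := by
          simpa using (congrArg NNReal.toReal hgc).symm
      _ ≤ ‖φ f‖ := hφf ▸ le_abs_self _
      _ ≤ ‖φ‖ := φ.unit_le_opNorm f hf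
  rwa [one_div, Real.rpow_inv_le_iff_of_pos (by positivity) (norm_nonneg _) hP.symm.pos] at hsum

theorem tendsto_apply_zero_of_tendsto_coord_zero (hP : P.toReal.HolderConjugate r')
    (φ : StrongDual ℝ ℓ^P(ι, ℝ)) {g : κ → ℓ^P(ι, ℝ)} {M : ℝ} (hg : ∀ n, ‖g n‖ ≤ M)
    (hlim : ∀ x, Tendsto (fun n => g n x) l (𝓝 0)) :
    Tendsto (fun n => φ (g n)) l (𝓝 0) := by
  classical
  let c : ι → ℝ := fun x => φ (lp.single P x 1)
  have hφ (f : ℓ^P(ι, ℝ)) : HasSum (fun x => c x * f x) (φ f) := by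
    have hPtop : P ≠ ∞ := by rintro rfl; simpa using hP.pos
    have hsingle x : φ (lp.single P x (f x)) = c x * f x := by
      rw [← mul_one (f x), ← smul_eq_mul, lp.single_smul, map_smul, smul_eq_mul, smul_eq_mul,
        mul_one, mul_comm]
    simpa only [Function.comp_def, hsingle] using φ.hasSum (lp.hasSum_single hPtop f)
  have hnorm n : ∑' x, |g n x| ^ P.toReal ≤ M ^ P.toReal := by
    simpa only [Real.norm_eq_abs, lp.norm_rpow_eq_tsum hP.pos] using
      Real.rpow_le_rpow (norm_nonneg _) (hg n) hP.nonneg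
  have habs : Tendsto (fun n => ∑' x, |c x| * |g n x|) l (𝓝 0) := by
    refine tendsto_tsum_zero_of_forall_le_add (g := fun n x => |g n x| ^ P.toReal)
      (fun n x => by positivity) (fun n x => by positivity)
      (fun n => (lp.memℓp (g n)).summable hP.pos) hnorm (summable_abs_apply_single_rpow hP φ)
      (fun ε hε => ⟨(ε ^ (P.toReal - 1)⁻¹)⁻¹, fun n x => ?_⟩) fun x => ?_
    · lift ε to ℝ≥0 using hε.le
      have h := mul_le_rpow_add_inv_mul_rpow hP (t := ε ^ (P.toReal - 1)⁻¹)
        (NNReal.rpow_pos (by exact_mod_cast hε)) ‖c x‖₊ ‖g n x‖₊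
      rw [← NNReal.rpow_mul, inv_mul_cancel₀ hP.sub_one_ne_zero, NNReal.rpow_one] at h
      exact_mod_cast h
    · simpa using (hlim x).abs.const_mul |c x|
  refine squeeze_zero_norm (fun n => ?_) habs
  calc ‖φ (g n)‖ = ‖∑' x, c x * g n x‖ := by rw [(hφ _).tsum_eq]
    _ ≤ ∑' x, ‖c x * g n x‖ := norm_tsum_le_tsum_norm (hφ _).summable.norm
    _ = ∑' x, |c x| * |g n x| := by simp only [norm_mul, Real.norm_eq_abs]

theorem lp_tendsto_of_tendsto_tsum (hP : 0 < P.toReal) {h : κ → ℓ^P(ι, ℝ)} {w : ℓ^P(ι, ℝ)}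
    (hh : Tendsto (fun n => ∑' x, |h n x - w x| ^ P.toReal) l (𝓝 0)) :
    Tendsto h l (𝓝 w) := by
  rw [tendsto_iff_norm_sub_tendsto_zero]
  have := hh.rpow_const (p := 1 / P.toReal) (Or.inr (by positivity))
  simpa [lp.norm_eq_tsum_rpow hP, Real.zero_rpow, hP.ne'] using this

theorem tendsto_apply_apply_zero {E : Type*} [NormedAddCommGroup E] [NormedSpace ℝ E]
    {T : κ → StrongDual ℝ E} {T₀ : StrongDual ℝ E} {g : κ → E} {M : ℝ} (hg : ∀ n, ‖g n‖ ≤ M)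
    (hT : Tendsto T l (𝓝 T₀)) (hg₀ : Tendsto (fun n => T₀ (g n)) l (𝓝 0)) :
    Tendsto (fun n => T n (g n)) l (𝓝 0) := by
  have hdiff : Tendsto (fun n => (T n - T₀) (g n)) l (𝓝 0) := by
    refine squeeze_zero_norm (fun n => ((T n - T₀).le_opNorm_of_le (hg n))) ?_
    simpa using (tendsto_iff_norm_sub_tendsto_zero.1 hT).mul_const M
  simpa using hdiff.add hg₀

theorem tendsto_bilin_add_sub {E : Type*} [NormedAddCommGroup E] [NormedSpace ℝ E]
    (B : E →L[ℝ] E →L[ℝ] ℝ) {g h : κ → E} {w : E} {M : ℝ} (hg : ∀ n, ‖g n‖ ≤ M)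
    (hg₀ : ∀ φ : StrongDual ℝ E, Tendsto (fun n => φ (g n)) l (𝓝 0)) (hh : Tendsto h l (𝓝 w)) :
    Tendsto (fun n => B (g n + h n) (g n + h n) - B (g n) (g n)) l (𝓝 (B w w)) := by
  have hhg : Tendsto (fun n => B (h n) (g n)) l (𝓝 0) :=
    tendsto_apply_apply_zero hg ((B.continuous.tendsto w).comp hh) (hg₀ (B w))
  have hgh : Tendsto (fun n => B.flip (h n) (g n)) l (𝓝 0) :=
    tendsto_apply_apply_zero hg ((B.flip.continuous.tendsto w).comp hh) (hg₀ (B.flip w))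
  have hhh : Tendsto (fun n => B (h n) (h n)) l (𝓝 (B w w)) := by
    have hB : Continuous fun x => B x x := by fun_prop
    exact (hB.tendsto w).comp hh
  convert (hhg.add hgh).add hhh using 2 with n
  · simp only [map_add, add_apply, ContinuousLinearMap.flip_apply]
    ring
  · simp

end LpSpace

section HardyLittlewoodSobolev

/-- Uniformly polynomial growth, of degree `D`, of the balls of the distance-like function `d`.
At `s = 0` the bound forces `d` to be positive, on the diagonal too, so that `d x y ^ (α - D)`
never takes a junk value. -/
def BallGrowth (d : ι → ι → ℝ≥0) (C : ℝ≥0) (D : ℝ) : Prop :=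
  ∀ x (s : ℝ≥0), ({y | d x y ≤ s}.encard : ℝ≥0∞) ≤ (C * s ^ D : ℝ≥0)

variable {d : ι → ι → ℝ≥0} {C : ℝ≥0} {D e α : ℝ}

theorem BallGrowth.pos (hd : BallGrowth d C D) (hD : D ≠ 0) (x y : ι) : 0 < d x y := by
  by_contra! hy
  have h : ({y | d x y ≤ 0}.encard : ℝ≥0∞) ≤ 0 := by
    simpa [NNReal.zero_rpow hD] using hd x 0
  rw [nonpos_iff_eq_zero, ENat.toENNReal_eq_zero, Set.encard_eq_zero] at h
  exact Set.eq_empty_iff_forall_notMem.1 h y hy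

theorem BallGrowth.tsum_shell_le (hd : BallGrowth d C D) (he : e ≤ 0) (x : ι) {σ : ℝ≥0}
    (hσ : 0 < σ) :
    ∑' y : {y | σ ≤ d x y ∧ d x y ≤ 2 * σ}, ((d x y ^ e : ℝ≥0) : ℝ≥0∞) ≤
      (C * (2 * σ) ^ D * σ ^ e : ℝ≥0) := by
  calc ∑' y : {y | σ ≤ d x y ∧ d x y ≤ 2 * σ}, ((d x y ^ e : ℝ≥0) : ℝ≥0∞)
      ≤ ∑' _ : {y | σ ≤ d x y ∧ d x y ≤ 2 * σ}, ((σ ^ e : ℝ≥0) : ℝ≥0∞) := by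
        exact ENNReal.tsum_le_tsum fun y =>
          ENNReal.coe_le_coe.2 (NNReal.rpow_le_rpow_of_nonpos hσ y.2.1 he)
    _ = {y | σ ≤ d x y ∧ d x y ≤ 2 * σ}.encard * (σ ^ e : ℝ≥0) := ENNReal.tsum_set_const ..
    _ ≤ {y | d x y ≤ 2 * σ}.encard * (σ ^ e : ℝ≥0) := by
        gcongr
        exact And.right
    _ ≤ (C * (2 * σ) ^ D * σ ^ e : ℝ≥0) := by
        rw [ENNReal.coe_mul]
        gcongr
        exact hd x _

theorem BallGrowth.tsum_rpow_le_of_forall_mem_shell (hd : BallGrowth d C D) (he : e ≤ 0)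
    {σ q : ℝ≥0} (hσ : 0 < σ) (hq : 0 < q) (hq1 : q ^ (D + e) < 1) {x : ι} {A : Set ι}
    (hA : ∀ y ∈ A, ∃ j : ℕ, σ * q ^ j ≤ d x y ∧ d x y ≤ 2 * (σ * q ^ j)) :
    ∑' y : A, ((d x y ^ e : ℝ≥0) : ℝ≥0∞) ≤
      (C * 2 ^ D * (1 - q ^ (D + e))⁻¹ * σ ^ (D + e) : ℝ≥0) := by
  have hterm (j : ℕ) : C * (2 * (σ * q ^ j)) ^ D * (σ * q ^ j) ^ e =
      C * 2 ^ D * σ ^ (D + e) * (q ^ (D + e)) ^ j := by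
    rw [NNReal.mul_rpow, mul_assoc C, mul_assoc, ← NNReal.rpow_add (by positivity),
      NNReal.mul_rpow, ← NNReal.rpow_natCast, ← NNReal.rpow_mul, mul_comm (j : ℝ),
      NNReal.rpow_mul, NNReal.rpow_natCast]
    ring
  calc ∑' y : A, ((d x y ^ e : ℝ≥0) : ℝ≥0∞)
      ≤ ∑' y : ⋃ j : ℕ, {y | σ * q ^ j ≤ d x y ∧ d x y ≤ 2 * (σ * q ^ j)},
          ((d x y ^ e : ℝ≥0) : ℝ≥0∞) :=
        ENNReal.tsum_mono_subtype (fun y => ((d x y ^ e : ℝ≥0) : ℝ≥0∞))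
          fun y hy => Set.mem_iUnion.2 (hA y hy)
    _ ≤ ∑' j : ℕ, ∑' y : {y | σ * q ^ j ≤ d x y ∧ d x y ≤ 2 * (σ * q ^ j)},
          ((d x y ^ e : ℝ≥0) : ℝ≥0∞) :=
        ENNReal.tsum_iUnion_le_tsum (fun y => ((d x y ^ e : ℝ≥0) : ℝ≥0∞)) _
    _ ≤ ∑' j : ℕ, ((C * 2 ^ D * σ ^ (D + e) * (q ^ (D + e)) ^ j : ℝ≥0) : ℝ≥0∞) := by
        gcongr with j
        exact (hd.tsum_shell_le he x (by positivity)).trans_eq (by rw [hterm])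
    _ = (C * 2 ^ D * (1 - q ^ (D + e))⁻¹ * σ ^ (D + e) : ℝ≥0) := by
        rw [← ENNReal.coe_tsum ((NNReal.summable_geometric hq1).mul_left _), NNReal.tsum_mul_left,
          NNReal.tsum_geometric hq1, mul_right_comm]

theorem BallGrowth.exists_tsum_rpow_near_le (hd : BallGrowth d C D) (hα : 0 < α) (hαD : α < D) :
    ∃ K : ℝ≥0, ∀ (x : ι) (ρ : ℝ≥0), 0 < ρ →
      ∑' y : {y | d x y ≤ ρ}, ((d x y ^ (α - D) : ℝ≥0) : ℝ≥0∞) ≤ (K * ρ ^ α : ℝ≥0) := by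
  have hq : (2⁻¹ : ℝ≥0) ^ (D + (α - D)) < 1 := by
    rw [add_sub_cancel]
    exact NNReal.rpow_lt_one (by norm_num) hα
  refine ⟨C * 2 ^ D * (1 - 2⁻¹ ^ (D + (α - D)))⁻¹, fun x ρ hρ => ?_⟩
  refine (hd.tsum_rpow_le_of_forall_mem_shell (sub_nonpos.2 hαD.le) (half_pos hρ) (by positivity)
    hq fun y (hy : d x y ≤ ρ) => ?_).trans (ENNReal.coe_le_coe.2 ?_)
  · have hy0 : 0 < d x y := hd.pos (hα.trans hαD).ne' x y
    obtain ⟨j, hj, hj'⟩ := exists_nat_pow_near_of_lt_one (div_pos hy0 hρ)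
      ((div_le_one hρ).2 hy) (y := 2⁻¹) (by positivity) (by norm_num)
    rw [lt_div_iff₀ hρ, pow_succ] at hj
    rw [div_le_iff₀ hρ] at hj'
    exact ⟨j, hj.le.trans_eq' (by ring), hj'.trans_eq (by ring)⟩
  · rw [add_sub_cancel]
    gcongr
    exact half_le_self ρ.2

theorem BallGrowth.exists_tsum_rpow_far_le (hd : BallGrowth d C D) (hD : 0 < D) :
    ∃ K : ℝ≥0, ∀ (x : ι) (ρ : ℝ≥0), 0 < ρ →
      ∑' y : {y | ρ < d x y}, ((d x y ^ (-2 * D) : ℝ≥0) : ℝ≥0∞) ≤ (K * ρ ^ (-D) : ℝ≥0) := by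
  have hexp : D + -2 * D = -D := by ring
  have hq : (2 : ℝ≥0) ^ (D + -2 * D) < 1 := by
    rw [hexp]
    exact NNReal.rpow_lt_one_of_one_lt_of_neg one_lt_two (neg_neg_of_pos hD)
  refine ⟨C * 2 ^ D * (1 - 2 ^ (D + -2 * D))⁻¹, fun x ρ hρ => ?_⟩
  rw [← hexp]
  refine hd.tsum_rpow_le_of_forall_mem_shell (by linarith) hρ two_pos hq
    fun y (hy : ρ < d x y) => ?_
  obtain ⟨j, hj, hj'⟩ := exists_nat_pow_near ((one_le_div hρ).2 hy.le) one_lt_two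
  rw [le_div_iff₀ hρ] at hj
  rw [div_lt_iff₀ hρ, pow_succ] at hj'
  exact ⟨j, hj.trans_eq' (by ring), hj'.le.trans_eq (by ring)⟩

theorem holderConjugate_two_mul_div_add (hα : 0 < α) (hαD : α < D) :
    (2 * D / (D + α)).HolderConjugate (2 * D / (D - α)) := by
  have hD : 0 < D := hα.trans hαD
  refine Real.holderConjugate_iff.2 ⟨?_, ?_⟩
  · rw [lt_div_iff₀ (by positivity)]
    linarith
  · field_simp [(sub_pos.2 hαD).ne']
    ring

theorem BallGrowth.exists_tsum_rpow_mul_near_le (hd : BallGrowth d C D) (hα : 0 < α) (hαD : α < D) :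
    ∃ K : ℝ≥0, ∀ (x : ι) (b : ι → ℝ≥0) (t ρ : ℝ≥0), 0 < ρ →
      ∑' y : {y | b y ≤ t ∧ d x y ≤ ρ}, ((d x y ^ (α - D) * b y : ℝ≥0) : ℝ≥0∞) ≤
        (t * (K * ρ ^ α) : ℝ≥0) := by
  obtain ⟨K, hK⟩ := hd.exists_tsum_rpow_near_le hα hαD
  refine ⟨K, fun x b t ρ hρ => ?_⟩
  calc ∑' y : {y | b y ≤ t ∧ d x y ≤ ρ}, ((d x y ^ (α - D) * b y : ℝ≥0) : ℝ≥0∞)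
      ≤ ∑' y : {y | b y ≤ t ∧ d x y ≤ ρ}, (t * (d x y ^ (α - D) : ℝ≥0) : ℝ≥0∞) := by
        refine ENNReal.tsum_le_tsum fun y => ?_
        rw [mul_comm, ENNReal.coe_mul]
        gcongr
        exact y.2.1
    _ ≤ ∑' y : {y | d x y ≤ ρ}, (t * (d x y ^ (α - D) : ℝ≥0) : ℝ≥0∞) :=
        ENNReal.tsum_mono_subtype (fun y => (t * (d x y ^ (α - D) : ℝ≥0) : ℝ≥0∞))
          fun y hy => hy.2
    _ ≤ (t * (K * ρ ^ α) : ℝ≥0) := by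
        rw [ENNReal.tsum_mul_left, ENNReal.coe_mul]
        gcongr
        exact hK x ρ hρ

theorem BallGrowth.exists_tsum_rpow_mul_far_le (hd : BallGrowth d C D) (hα : 0 < α) (hαD : α < D) :
    ∃ K : ℝ≥0, ∀ (x : ι) (b : ι → ℝ≥0) (t ρ : ℝ≥0), 0 < t → 0 < ρ →
      ∑' y, ((b y ^ (2 * D / (D + α)) : ℝ≥0) : ℝ≥0∞) ≤ 1 →
      ∑' y : {y | ρ < d x y}, ((d x y ^ (α - D) * b y : ℝ≥0) : ℝ≥0∞) ≤
        (t ^ (2 * D / (D + α) - 1) + t⁻¹ * (K * ρ ^ (-D)) : ℝ≥0) := by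
  have hDα : D - α ≠ 0 := (sub_pos.2 hαD).ne'
  have hconj := holderConjugate_two_mul_div_add hα hαD
  obtain ⟨K, hK⟩ := hd.exists_tsum_rpow_far_le (hα.trans hαD)
  refine ⟨K, fun x b t ρ ht hρ hb => ?_⟩
  set r := 2 * D / (D + α)
  have hyoung (y : ι) :
      d x y ^ (α - D) * b y ≤ t ^ (r - 1) * b y ^ r + t⁻¹ * d x y ^ (-2 * D) := by
    have hexp : (α - D) * (2 * D / (D - α)) = -2 * D := by
      field_simp
      ring
    rw [← hexp, NNReal.rpow_mul]
    exact mul_le_rpow_add_inv_mul_rpow hconj ht _ _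
  calc ∑' y : {y | ρ < d x y}, ((d x y ^ (α - D) * b y : ℝ≥0) : ℝ≥0∞)
      ≤ ∑' y : {y | ρ < d x y}, ((t ^ (r - 1) : ℝ≥0) * (b y ^ r : ℝ≥0) +
          (t⁻¹ : ℝ≥0) * (d x y ^ (-2 * D) : ℝ≥0) : ℝ≥0∞) :=
        ENNReal.tsum_le_tsum fun y => by
          simp only [← ENNReal.coe_mul, ← ENNReal.coe_add]
          exact ENNReal.coe_le_coe.2 (hyoung y)
    _ = (t ^ (r - 1) : ℝ≥0) * ∑' y : {y | ρ < d x y}, ((b y ^ r : ℝ≥0) : ℝ≥0∞) +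
          (t⁻¹ : ℝ≥0) * ∑' y : {y | ρ < d x y}, ((d x y ^ (-2 * D) : ℝ≥0) : ℝ≥0∞) := by
        rw [ENNReal.tsum_add, ENNReal.tsum_mul_left, ENNReal.tsum_mul_left]
    _ ≤ (t ^ (r - 1) : ℝ≥0) * 1 + (t⁻¹ : ℝ≥0) * (K * ρ ^ (-D) : ℝ≥0) := by
        gcongr
        · exact (ENNReal.tsum_comp_le_tsum_of_injective Subtype.val_injective _).trans hb
        · exact hK x ρ hρ
    _ = (t ^ (r - 1) + t⁻¹ * (K * ρ ^ (-D)) : ℝ≥0) := by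
        rw [mul_one, ENNReal.coe_add, ENNReal.coe_mul t⁻¹]

theorem BallGrowth.exists_tsum_rpow_mul_le (hd : BallGrowth d C D) (hα : 0 < α) (hαD : α < D) :
    ∃ K : ℝ≥0, ∀ (x : ι) (b : ι → ℝ≥0) (t : ℝ≥0), 0 < t →
      ∑' y, ((b y ^ (2 * D / (D + α)) : ℝ≥0) : ℝ≥0∞) ≤ 1 →
      ∑' y : {y | b y ≤ t}, ((d x y ^ (α - D) * b y : ℝ≥0) : ℝ≥0∞) ≤
        (K * t ^ (2 * D / (D + α) - 1) : ℝ≥0) := by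
  obtain ⟨K₁, hnear⟩ := hd.exists_tsum_rpow_mul_near_le hα hαD
  obtain ⟨K₂, hfar⟩ := hd.exists_tsum_rpow_mul_far_le hα hαD
  refine ⟨K₁ + (1 + K₂), fun x b t ht hb => ?_⟩
  have hD : 0 < D := hα.trans hαD
  let f : ι → ℝ≥0∞ := fun y => (d x y ^ (α - D) * b y : ℝ≥0)
  -- The radius at which `t * ρ ^ α` and `t⁻¹ * ρ ^ (-D)` agree.
  let ρ : ℝ≥0 := t ^ (-2 / (D + α))
  have hρ : 0 < ρ := NNReal.rpow_pos ht
  have hρα : t * ρ ^ α = t ^ (2 * D / (D + α) - 1) := by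
    have hexp : 1 + -2 / (D + α) * α = 2 * D / (D + α) - 1 := by
      field_simp
      ring
    rw [← NNReal.rpow_mul, ← hexp, NNReal.rpow_add ht.ne', NNReal.rpow_one]
  have hρD : t⁻¹ * ρ ^ (-D) = t ^ (2 * D / (D + α) - 1) := by
    have hexp : -1 + -2 / (D + α) * -D = 2 * D / (D + α) - 1 := by
      field_simp
      ring
    rw [← NNReal.rpow_mul, ← hexp, NNReal.rpow_add ht.ne', NNReal.rpow_neg_one]
  calc ∑' y : {y | b y ≤ t}, f y
      ≤ ∑' y : ↑({y | b y ≤ t ∧ d x y ≤ ρ} ∪ {y | ρ < d x y}), f y :=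
        ENNReal.tsum_mono_subtype f fun y hy =>
          (le_or_gt (d x y) ρ).imp (fun h => ⟨hy, h⟩) id
    _ ≤ ∑' y : {y | b y ≤ t ∧ d x y ≤ ρ}, f y + ∑' y : {y | ρ < d x y}, f y :=
        ENNReal.tsum_union_le f _ _
    _ ≤ (t * (K₁ * ρ ^ α) : ℝ≥0) +
          (t ^ (2 * D / (D + α) - 1) + t⁻¹ * (K₂ * ρ ^ (-D)) : ℝ≥0) :=
        add_le_add (hnear x b t ρ hρ) (hfar x b t ρ ht hρ hb)
    _ = ((K₁ + (1 + K₂)) * t ^ (2 * D / (D + α) - 1) : ℝ≥0) := by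
        rw [← ENNReal.coe_add, mul_left_comm, mul_left_comm t⁻¹, hρα, hρD]
        congr 1
        ring

theorem tsum_tsum_ite_mul_le {k : ι → ι → ℝ≥0} {r : ℝ} {K : ℝ≥0}
    {a b : ι → ℝ≥0}
    (hrow : ∀ x t, 0 < t →
      ∑' y : {y | b y ≤ t}, ((k x y * b y : ℝ≥0) : ℝ≥0∞) ≤ (K * t ^ (r - 1) : ℝ≥0))
    (ha : ∑' x, ((a x ^ r : ℝ≥0) : ℝ≥0∞) ≤ 1) :
    ∑' x, ∑' y, (if b y ≤ a x then ((k x y * b y * a x : ℝ≥0) : ℝ≥0∞) else 0) ≤ K := by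
  have hx (x : ι) : ∑' y, (if b y ≤ a x then ((k x y * b y * a x : ℝ≥0) : ℝ≥0∞) else 0) ≤
      K * (a x ^ r : ℝ≥0) := by
    rcases eq_zero_or_pos (a x) with h0 | hpos
    · simp [h0]
    · calc ∑' y, (if b y ≤ a x then ((k x y * b y * a x : ℝ≥0) : ℝ≥0∞) else 0)
          = (∑' y : {y | b y ≤ a x}, ((k x y * b y : ℝ≥0) : ℝ≥0∞)) * a x := by
            rw [← ENNReal.tsum_mul_right,
              tsum_subtype {y | b y ≤ a x} fun y => ((k x y * b y : ℝ≥0) : ℝ≥0∞) * a x]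
            simp only [Set.indicator_apply, Set.mem_ofPred_eq, ENNReal.coe_mul]
        _ ≤ (K * a x ^ (r - 1) : ℝ≥0) * a x := by gcongr; exact hrow x (a x) hpos
        _ = K * (a x ^ r : ℝ≥0) := by
            rw [← ENNReal.coe_mul, ← ENNReal.coe_mul, mul_assoc, ← NNReal.rpow_add_one hpos.ne',
              sub_add_cancel]
  calc _ ≤ ∑' x, K * ((a x ^ r : ℝ≥0) : ℝ≥0∞) := ENNReal.tsum_le_tsum hx
    _ ≤ K * 1 := by rw [ENNReal.tsum_mul_left]; gcongr
    _ = K := mul_one _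

theorem BallGrowth.exists_tsum_tsum_rpow_mul_mul_le (hd : BallGrowth d C D)
    (hd_symm : ∀ x y, d x y = d y x) (hα : 0 < α) (hαD : α < D) :
    ∃ K : ℝ≥0, ∀ a b : ι → ℝ≥0,
      ∑' x, ((a x ^ (2 * D / (D + α)) : ℝ≥0) : ℝ≥0∞) ≤ 1 →
      ∑' y, ((b y ^ (2 * D / (D + α)) : ℝ≥0) : ℝ≥0∞) ≤ 1 →
      ∑' x, ∑' y, ((d x y ^ (α - D) * b y * a x : ℝ≥0) : ℝ≥0∞) ≤ K := by
  obtain ⟨K, hK⟩ := hd.exists_tsum_rpow_mul_le hα hαD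
  refine ⟨K + K, fun a b ha hb => ?_⟩
  have hsplit x y : ((d x y ^ (α - D) * b y * a x : ℝ≥0) : ℝ≥0∞) ≤
      (if b y ≤ a x then ((d x y ^ (α - D) * b y * a x : ℝ≥0) : ℝ≥0∞) else 0) +
        (if a x ≤ b y then ((d y x ^ (α - D) * a x * b y : ℝ≥0) : ℝ≥0∞) else 0) := by
    rcases le_total (b y) (a x) with h | h
    · rw [if_pos h]
      exact le_self_add
    · rw [if_pos h, hd_symm y x, mul_right_comm]
      exact le_add_self
  calc ∑' x, ∑' y, ((d x y ^ (α - D) * b y * a x : ℝ≥0) : ℝ≥0∞)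
      ≤ ∑' x, ∑' y, (if b y ≤ a x then ((d x y ^ (α - D) * b y * a x : ℝ≥0) : ℝ≥0∞) else 0) +
          ∑' y, ∑' x, (if a x ≤ b y then ((d y x ^ (α - D) * a x * b y : ℝ≥0) : ℝ≥0∞) else 0) := by
        rw [ENNReal.tsum_comm (f := fun y x => if a x ≤ b y then _ else _), ← ENNReal.tsum_add]
        simp only [← ENNReal.tsum_add]
        exact ENNReal.tsum_le_tsum fun x => ENNReal.tsum_le_tsum (hsplit x)
    _ ≤ (K + K : ℝ≥0) := by
        rw [ENNReal.coe_add]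
        exact add_le_add (tsum_tsum_ite_mul_le (fun x t ht => hK x b t ht hb) ha)
          (tsum_tsum_ite_mul_le (fun y t ht => hK y a t ht ha) hb)

end HardyLittlewoodSobolev

section LpBoundedKernel

variable {P : ℝ≥0∞} [Fact (1 ≤ P)] {k : ι → ι → ℝ}

/-- The bilinear form `∑ x, ∑ y, k x y * b y * a x` of the kernel `k` converges absolutely on
`ℓ^P × ℓ^P` and is bounded there. Stated with extended norms, so that the bound includes
convergence. -/
def IsLpBoundedKernel (P : ℝ≥0∞) [Fact (1 ≤ P)] (k : ι → ι → ℝ) : Prop :=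
  ∃ C : ℝ≥0, ∀ a b : ℓ^P(ι, ℝ), ∑' x, ∑' y, ‖k x y * b y * a x‖ₑ ≤ C * ‖a‖ₑ * ‖b‖ₑ

theorem IsLpBoundedKernel.summable (hk : IsLpBoundedKernel P k) (a b : ℓ^P(ι, ℝ)) :
    Summable fun z : ι × ι => k z.1 z.2 * b z.2 * a z.1 := by
  obtain ⟨C, hC⟩ := hk
  refine (tsum_enorm_ne_top_iff_summable_norm.1 (ne_top_of_le_ne_top ?_
    ((ENNReal.tsum_prod (f := fun x y => ‖k x y * b y * a x‖ₑ)).trans_le (hC a b)))).of_norm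
  finiteness

theorem IsLpBoundedKernel.exists_norm_tsum_le (hk : IsLpBoundedKernel P k) :
    ∃ C, ∀ a b : ℓ^P(ι, ℝ), ‖∑' z : ι × ι, k z.1 z.2 * b z.2 * a z.1‖ ≤ C * ‖a‖ * ‖b‖ := by
  obtain ⟨C, hC⟩ := hk
  refine ⟨C, fun a b => ?_⟩
  suffices h : ‖∑' z : ι × ι, k z.1 z.2 * b z.2 * a z.1‖ₑ ≤ C * ‖a‖ₑ * ‖b‖ₑ by
    simp only [enorm_eq_nnnorm] at h
    exact_mod_cast h
  exact enorm_tsum_le_tsum_enorm.trans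
    ((ENNReal.tsum_prod (f := fun x y => ‖k x y * b y * a x‖ₑ)).trans_le (hC a b))

theorem IsLpBoundedKernel.exists_bilin_eq_tsum_conv_mul (hk : IsLpBoundedKernel P k) :
    ∃ B : ℓ^P(ι, ℝ) →L[ℝ] ℓ^P(ι, ℝ) →L[ℝ] ℝ, ∀ a b, B a b = ∑' x, conv k b x * a x := by
  obtain ⟨C, hC⟩ := hk.exists_norm_tsum_le
  let B : ℓ^P(ι, ℝ) →ₗ[ℝ] ℓ^P(ι, ℝ) →ₗ[ℝ] ℝ :=
    LinearMap.mk₂ ℝ (fun a b => ∑' z : ι × ι, k z.1 z.2 * b z.2 * a z.1)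
      (fun a a' b => by
        rw [← (hk.summable a b).tsum_add (hk.summable a' b)]
        simp only [lp.coeFn_add, Pi.add_apply, mul_add])
      (fun c a b => by
        rw [smul_eq_mul, ← tsum_mul_left]
        simp only [lp.coeFn_smul, Pi.smul_apply, smul_eq_mul, mul_left_comm])
      (fun a b b' => by
        rw [← (hk.summable a b).tsum_add (hk.summable a b')]
        simp only [lp.coeFn_add, Pi.add_apply, mul_add, add_mul])
      (fun c a b => by
        rw [smul_eq_mul, ← tsum_mul_left]
        simp only [lp.coeFn_smul, Pi.smul_apply, smul_eq_mul, mul_left_comm, mul_assoc])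
  refine ⟨B.mkContinuous₂ C hC, fun a b => ?_⟩
  calc B a b = ∑' x, ∑' y, k x y * b y * a x := (hk.summable a b).tsum_prod
    _ = ∑' x, conv k b x * a x := by simp only [tsum_mul_right, conv]

theorem IsLpBoundedKernel.indicator (hk : IsLpBoundedKernel P k) (Ω : Set ι) :
    IsLpBoundedKernel P (Ω.indicator k) := by
  obtain ⟨C, hC⟩ := hk
  refine ⟨C, fun a b => le_trans ?_ (hC a b)⟩
  gcongr with x y
  by_cases hx : x ∈ Ω <;> simp [hx]

theorem tsum_nnnorm_div_rpow_le_one (hP : 0 < P.toReal) (f : ℓ^P(ι, ℝ)) :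
    ∑' x, (((‖f x‖₊ / ‖f‖₊) ^ P.toReal : ℝ≥0) : ℝ≥0∞) ≤ 1 := by
  have hsum : HasSum (fun x => ‖f x‖₊ ^ P.toReal) (‖f‖₊ ^ P.toReal) :=
    NNReal.hasSum_coe.1 (by simpa using lp.hasSum_norm hP f)
  simp only [NNReal.div_rpow]
  rw [(ENNReal.hasSum_coe.2 (hsum.div_const _)).tsum_eq]
  exact_mod_cast div_self_le_one _

theorem BallGrowth.isLpBoundedKernel {d : ι → ι → ℝ≥0} {C c : ℝ≥0} {D α : ℝ}
    (hd : BallGrowth d C D) (hd_symm : ∀ x y, d x y = d y x) (hα : 0 < α) (hαD : α < D)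
    (hP : P.toReal = 2 * D / (D + α)) (hk : ∀ x y, ‖k x y‖₊ ≤ c * d x y ^ (α - D)) :
    IsLpBoundedKernel P k := by
  obtain ⟨K, hK⟩ := hd.exists_tsum_tsum_rpow_mul_mul_le hd_symm hα hαD
  have hP0 : 0 < P.toReal := hP ▸ (holderConjugate_two_mul_div_add hα hαD).pos
  have hunit (f : ℓ^P(ι, ℝ)) := hP ▸ tsum_nnnorm_div_rpow_le_one hP0 f
  have hcancel (f : ℓ^P(ι, ℝ)) (x : ι) : ‖f x‖₊ = ‖f‖₊ * (‖f x‖₊ / ‖f‖₊) := by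
    refine (mul_div_cancel_of_imp' fun hf => ?_).symm
    rw [nnnorm_eq_zero.1 hf]
    simp
  refine ⟨c * K, fun a b => ?_⟩
  calc ∑' x, ∑' y, ‖k x y * b y * a x‖ₑ
      ≤ ∑' x, ∑' y, (c * ‖a‖₊ * ‖b‖₊ : ℝ≥0) *
          ((d x y ^ (α - D) * (‖b y‖₊ / ‖b‖₊) * (‖a x‖₊ / ‖a‖₊) : ℝ≥0) : ℝ≥0∞) := by
        refine ENNReal.tsum_le_tsum fun x => ENNReal.tsum_le_tsum fun y => ?_
        rw [enorm_eq_nnnorm, ← ENNReal.coe_mul, ENNReal.coe_le_coe, nnnorm_mul, nnnorm_mul]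
        calc ‖k x y‖₊ * ‖b y‖₊ * ‖a x‖₊ ≤ c * d x y ^ (α - D) * ‖b y‖₊ * ‖a x‖₊ := by
              gcongr; exact hk x y
          _ = c * d x y ^ (α - D) * (‖b‖₊ * (‖b y‖₊ / ‖b‖₊)) * (‖a‖₊ * (‖a x‖₊ / ‖a‖₊)) := by
              rw [← hcancel, ← hcancel]
          _ = _ := by ring
    _ = (c * ‖a‖₊ * ‖b‖₊ : ℝ≥0) * ∑' x, ∑' y,
          ((d x y ^ (α - D) * (‖b y‖₊ / ‖b‖₊) * (‖a x‖₊ / ‖a‖₊) : ℝ≥0) : ℝ≥0∞) := by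
        simp only [ENNReal.tsum_mul_left]
    _ ≤ (c * ‖a‖₊ * ‖b‖₊ : ℝ≥0) * K := by gcongr; exact hK _ _ (hunit a) (hunit b)
    _ = (c * K : ℝ≥0) * ‖a‖ₑ * ‖b‖ₑ := by
        simp only [enorm_eq_nnnorm, ENNReal.coe_mul]
        ring

end LpBoundedKernel

section WordMetric

variable [Group G] {S : Finset G}

/-- The word metric with its zero values raised to `1`. The kernel `posWordDist S x y ^ (α - N)`
then dominates the Riesz kernel on the diagonal as well. -/
def posWordDist (S : Finset G) (x y : G) : ℝ≥0 := max 1 (wordDist S x y)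

theorem wordDist_self (S : Finset G) (x : G) : wordDist S x x = 0 :=
  Nat.sInf_eq_zero.2 (.inl ⟨[], by simp⟩)

theorem wordDist_one_inv_mul (S : Finset G) (x y : G) :
    wordDist S 1 (x⁻¹ * y) = wordDist S x y := by
  simp only [wordDist, one_mul, inv_mul_eq_iff_eq_mul]

theorem wordDist_comm (hS : ∀ s ∈ S, s⁻¹ ∈ S) (x y : G) : wordDist S x y = wordDist S y x := by
  suffices h : ∀ {x y : G} {k}, (∃ l : List G, (∀ s ∈ l, s ∈ S) ∧ l.length = k ∧ y = x * l.prod) →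
      ∃ l : List G, (∀ s ∈ l, s ∈ S) ∧ l.length = k ∧ x = y * l.prod from
    congrArg sInf (Set.ext fun k => ⟨h, h⟩)
  rintro x y k ⟨l, hl, rfl, rfl⟩
  refine ⟨(l.map (·⁻¹)).reverse, fun s hs => ?_, by simp, by simp [← List.prod_inv_reverse]⟩
  obtain ⟨t, ht, rfl⟩ := List.mem_map.1 (List.mem_reverse.1 hs)
  exact hS t (hl t ht)

theorem wordDist_rpow_le_posWordDist_rpow {e : ℝ} (x y : G) :
    (wordDist S x y : ℝ) ^ e ≤ posWordDist S x y ^ e := by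
  rcases Nat.eq_zero_or_pos (wordDist S x y) with h | h
  · simpa [posWordDist, h] using Real.zero_rpow_le_one e
  · have h1 : (1 : ℝ≥0) ≤ wordDist S x y := by exact_mod_cast h
    simp [posWordDist, h1]

theorem nnnorm_le_mul_posWordDist_rpow {R : G → G → ℝ} {e : ℝ} {c : ℝ≥0}
    (hR_nonneg : ∀ x y, 0 ≤ R x y)
    (hR_up : ∀ x y, x ≠ y → R x y ≤ c * (wordDist S x y : ℝ) ^ e) (hR_diag : ∀ x, R x x ≤ c)
    (x y : G) : ‖R x y‖₊ ≤ c * posWordDist S x y ^ e := by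
  rw [← NNReal.coe_le_coe, coe_nnnorm, Real.norm_of_nonneg (hR_nonneg x y)]
  push_cast
  rcases eq_or_ne x y with rfl | hxy
  · simpa [posWordDist, wordDist_self] using hR_diag x
  · exact (hR_up x y hxy).trans
      (mul_le_mul_of_nonneg_left (wordDist_rpow_le_posWordDist_rpow x y) c.2)

theorem ballGrowth_posWordDist {C₁ C₂ : ℝ} {N : ℕ} (hC₁ : 0 < C₁)
    (hgrowth : ∀ n : ℕ, 1 ≤ n →
      C₁ * (n : ℝ) ^ N ≤ (Nat.card {x : G // wordDist S 1 x ≤ n} : ℝ) ∧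
      (Nat.card {x : G // wordDist S 1 x ≤ n} : ℝ) ≤ C₂ * (n : ℝ) ^ N) :
    BallGrowth (posWordDist S) C₂.toNNReal N := by
  intro x s
  rcases lt_or_ge s 1 with hs | hs
  · simp [posWordDist, hs.not_ge]
  let A : Set G := {z | wordDist S 1 z ≤ ⌊s⌋₊}
  have hn : 1 ≤ ⌊s⌋₊ := Nat.one_le_floor_iff s |>.2 hs
  obtain ⟨hlow, hup⟩ : C₁ * (⌊s⌋₊ : ℝ) ^ N ≤ A.ncard ∧ (A.ncard : ℝ) ≤ C₂ * (⌊s⌋₊ : ℝ) ^ N :=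
    hgrowth _ hn
  -- `Nat.card` of an infinite type is `0`, so finiteness comes from the lower growth bound.
  have hA : A.Finite := by
    refine Set.finite_of_ncard_pos (Nat.cast_pos.1 (hlow.trans_lt' ?_))
    positivity
  have hsub : {y | posWordDist S x y ≤ s} ⊆ (x * ·) '' A := fun y hy =>
    ⟨x⁻¹ * y, Nat.le_floor (wordDist_one_inv_mul S x y ▸ (max_le_iff.1 hy).2),
      mul_inv_cancel_left x y⟩
  have hcard : (A.ncard : ℝ≥0) ≤ C₂.toNNReal * s ^ (N : ℝ) := by
    rw [← NNReal.coe_le_coe, NNReal.rpow_natCast]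
    push_cast
    calc (A.ncard : ℝ) ≤ C₂ * (⌊s⌋₊ : ℝ) ^ N := hup
      _ ≤ max C₂ 0 * (s : ℝ) ^ N := by
        gcongr
        · exact le_max_left _ _
        · exact_mod_cast Nat.floor_le s.2
  calc ({y | posWordDist S x y ≤ s}.encard : ℝ≥0∞) ≤ A.encard := by
        exact_mod_cast (Set.encard_le_encard hsub).trans (Set.encard_image_le _ A)
    _ = (A.ncard : ℝ≥0) := by rw [← hA.cast_ncard_eq]; simp
    _ ≤ (C₂.toNNReal * s ^ (N : ℝ) : ℝ≥0) := ENNReal.coe_le_coe.2 hcard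

end WordMetric

section BrezisLieb

theorem exists_tsum_abs_sub_rpow_le {s : ℝ} (hs : 0 < s) {u : κ → ι → ℝ} {v : ι → ℝ} {M : ℝ}
    (hu : ∀ n, Memlp s (u n)) (huM : ∀ n, ∑' x, |u n x| ^ s ≤ M) (hv : Memlp s v) :
    (∀ n, Memlp s fun x => u n x - v x) ∧ ∃ T, ∀ n, ∑' x, |u n x - v x| ^ s ≤ T := by
  obtain ⟨C, -, hC⟩ := exists_abs_add_rpow_le hs
  have hle n x : |u n x - v x| ^ s ≤ 2 * |u n x| ^ s + C * |v x| ^ s := by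
    simpa only [sub_eq_add_neg, abs_neg] using hC (u n x) (-v x)
  have hmaj n : Summable fun x => 2 * |u n x| ^ s + C * |v x| ^ s :=
    ((hu n).mul_left 2).add (hv.mul_left C)
  have hmem n : Summable fun x => |u n x - v x| ^ s :=
    (hmaj n).of_nonneg_of_le (fun x => by positivity) (hle n)
  refine ⟨hmem, 2 * M + C * ∑' x, |v x| ^ s, fun n => ?_⟩
  calc ∑' x, |u n x - v x| ^ s ≤ ∑' x, (2 * |u n x| ^ s + C * |v x| ^ s) :=
        (hmem n).tsum_le_tsum (hle n) (hmaj n)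
    _ = 2 * ∑' x, |u n x| ^ s + C * ∑' x, |v x| ^ s := by
        rw [((hu n).mul_left 2).tsum_add (hv.mul_left C), tsum_mul_left, tsum_mul_left]
    _ ≤ 2 * M + C * ∑' x, |v x| ^ s := by gcongr; exact huM n

theorem tendsto_tsum_abs_rpow_sub_sub_rpow {p r : ℝ} (hp : 0 < p) (hr : 0 < r)
    {u : κ → ι → ℝ} {v : ι → ℝ} {T : ℝ} (huv : ∀ n, Memlp (p * r) fun x => u n x - v x)
    (hT : ∀ n, ∑' x, |u n x - v x| ^ (p * r) ≤ T) (hv : Memlp (p * r) v)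
    (hpt : ∀ x, Tendsto (fun n => u n x) l (𝓝 (v x))) :
    Tendsto (fun n => ∑' x, |(|u n x| ^ p - |u n x - v x| ^ p) - |v x| ^ p| ^ r) l (𝓝 0) := by
  refine tendsto_tsum_zero_of_forall_le_add (fun n x => by positivity) (fun n x => by positivity)
    huv hT hv (fun ε hε => ?_) fun x => ?_
  · obtain ⟨C, -, hC⟩ := exists_abs_rpow_add_sub_sub_rpow_le hp hr hε
    exact ⟨C, fun n x => by simpa only [sub_add_cancel] using hC (u n x - v x) (v x)⟩
  · have hcont : Continuous fun t => |(|t| ^ p - |t - v x| ^ p) - |v x| ^ p| ^ r := by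
      have := hp.le
      have := hr.le
      fun_prop (disch := simp [*])
    simpa [Function.comp_def, Real.zero_rpow, hp.ne', hr.ne'] using
      (hcont.tendsto (v x)).comp (hpt x)

theorem Memlp.memℓp_abs_rpow {P : ℝ≥0∞} {p : ℝ} {f : ι → ℝ} (hf : Memlp (p * P.toReal) f) :
    Memℓp (fun x => |f x| ^ p) P := by
  refine memℓp_gen (hf.congr fun x => ?_)
  rw [Real.norm_of_nonneg (by positivity), Real.rpow_mul (abs_nonneg _)]

theorem IsLpBoundedKernel.brezisLieb [l.NeBot] {P : ℝ≥0∞} [Fact (1 ≤ P)] {k : ι → ι → ℝ}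
    (hk : IsLpBoundedKernel P k) (hP : 1 < P.toReal) {p : ℝ} (hp : 0 < p) {u : κ → ι → ℝ}
    {v : ι → ℝ} {M : ℝ} (hu : ∀ n, Memlp (p * P.toReal) (u n))
    (huM : ∀ n, ∑' x, |u n x| ^ (p * P.toReal) ≤ M)
    (hpt : ∀ x, Tendsto (fun n => u n x) l (𝓝 (v x))) :
    Tendsto (fun n => energy k p (u n) - energy k p fun x => u n x - v x) l
      (𝓝 (energy k p v)) := by
  have hP0 : 0 < P.toReal := one_pos.trans hP
  have hs : 0 < p * P.toReal := mul_pos hp hP0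
  have hv : Memlp (p * P.toReal) v :=
    summable_of_tendsto_of_tsum_le (fun n x => by positivity) hu huM
      fun x => (hpt x).abs.rpow_const (.inr hs.le)
  obtain ⟨huv, T, hT⟩ := exists_tsum_abs_sub_rpow_le hs hu huM hv
  obtain ⟨B, hB⟩ := hk.exists_bilin_eq_tsum_conv_mul
  let f n : ℓ^P(ι, ℝ) := ⟨_, (hu n).memℓp_abs_rpow⟩
  let g n : ℓ^P(ι, ℝ) := ⟨_, (huv n).memℓp_abs_rpow⟩
  let w : ℓ^P(ι, ℝ) := ⟨_, hv.memℓp_abs_rpow⟩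
  have hg_bound n : ‖g n‖ ≤ T ^ (1 / P.toReal) := by
    have hterm x : ‖g n x‖ ^ P.toReal = |u n x - v x| ^ (p * P.toReal) := by
      rw [Real.norm_of_nonneg (by positivity), Real.rpow_mul (abs_nonneg _)]
    rw [lp.norm_eq_tsum_rpow hP0]
    gcongr
    simpa only [hterm] using hT n
  have hg_zero x : Tendsto (fun n => g n x) l (𝓝 0) := by
    simpa [hp.ne'] using
      ((hpt x).sub_const (v x)).abs.rpow_const (p := p) (.inr hp.le)
  have hfg : Tendsto (fun n => f n - g n) l (𝓝 w) :=
    lp_tendsto_of_tendsto_tsum hP0 (tendsto_tsum_abs_rpow_sub_sub_rpow hp hP0 huv hT hv hpt)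
  have hlim := tendsto_bilin_add_sub B hg_bound
    (fun φ => tendsto_apply_zero_of_tendsto_coord_zero (.conjExponent hP) φ hg_bound hg_zero) hfg
  simp only [add_sub_cancel, hB] at hlim
  exact hlim

theorem energy_indicator (k : ι → ι → ℝ) (Ω : Set ι) (p : ℝ) (u : ι → ℝ) :
    energy (Ω.indicator k) p u = ∑' x : Ω, conv k (fun y => |u y| ^ p) x * |u x| ^ p := by
  rw [tsum_subtype Ω fun x => conv k (fun y => |u y| ^ p) x * |u x| ^ p]
  refine tsum_congr fun x => ?_
  by_cases hx : x ∈ Ω <;> simp [hx, conv]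

theorem tsum_abs_rpow_le_of_lpNorm_le {q M : ℝ} (hq : 0 < q) {f : ι → ℝ} (hf : lpNorm q f ≤ M) :
    ∑' x, |f x| ^ q ≤ M ^ q := by
  have h0 : 0 ≤ ∑' x, |f x| ^ q := tsum_nonneg fun x => by positivity
  rw [lpNorm, one_div] at hf
  exact (Real.rpow_inv_le_iff_of_pos h0 ((by positivity : 0 ≤ (∑' x, |f x| ^ q) ^ q⁻¹).trans hf)
    hq).1 hf

theorem brezisLieb_nonlocal_general [l.NeBot] {d : ι → ι → ℝ≥0} {C c : ℝ≥0} {D α : ℝ}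
    (hd : BallGrowth d C D) (hd_symm : ∀ x y, d x y = d y x) (hα : 0 < α) (hαD : α < D)
    {R : ι → ι → ℝ} (hR : ∀ x y, ‖R x y‖₊ ≤ c * d x y ^ (α - D)) (Ω : Set ι) {p : ℝ} (hp : 0 < p)
    {u : κ → ι → ℝ} {v : ι → ℝ} {M : ℝ}
    (hbdd : ∀ n, Memlp (2 * D * p / (D + α)) (u n) ∧ lpNorm (2 * D * p / (D + α)) (u n) ≤ M)
    (hpt : ∀ x, Tendsto (fun n => u n x) l (𝓝 (v x))) :
    Tendsto (fun n =>
        (∑' x : Ω, conv R (fun y => |u n y| ^ p) x * |u n x| ^ p) -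
          ∑' x : Ω, conv R (fun y => |u n y - v y| ^ p) x * |u n x - v x| ^ p)
      l (𝓝 (∑' x : Ω, conv R (fun y => |v y| ^ p) x * |v x| ^ p)) := by
  have hr := holderConjugate_two_mul_div_add hα hαD
  let P : ℝ≥0∞ := .ofReal (2 * D / (D + α))
  have hP : P.toReal = 2 * D / (D + α) := ENNReal.toReal_ofReal hr.nonneg
  have : Fact (1 ≤ P) := ⟨ENNReal.one_le_ofReal.2 hr.lt.le⟩
  have hq : 2 * D * p / (D + α) = p * P.toReal := by rw [hP]; ring
  rw [hq] at hbdd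
  simp only [← energy_indicator]
  exact ((hd.isLpBoundedKernel hd_symm hα hαD hP hR).indicator Ω).brezisLieb (hP ▸ hr.lt) hp
    (fun n => (hbdd n).1)
    (fun n => tsum_abs_rpow_le_of_lpNorm_le (mul_pos hp (hP ▸ hr.pos)) (hbdd n).2) hpt

end BrezisLieb

theorem brezisLieb_nonlocal
    [Group G] [Countable G]
    (S : Finset G) (hS_gen : Subgroup.closure (S : Set G) = ⊤)
    (hS_sym : ∀ s ∈ S, s⁻¹ ∈ S) (hS_e : (1 : G) ∉ S)
    (N : ℕ) (hN : 3 ≤ N)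
    (C₁ C₂ : ℝ) (hC₁ : 0 < C₁) (hC₂ : 0 < C₂)
    (hgrowth : ∀ n : ℕ, 1 ≤ n →
      C₁ * (n : ℝ) ^ N ≤ (Nat.card {x : G // wordDist S 1 x ≤ n} : ℝ) ∧
      (Nat.card {x : G // wordDist S 1 x ≤ n} : ℝ) ≤ C₂ * (n : ℝ) ^ N)
    (α : ℝ) (hα : 0 < α) (hαN : α < N)
    (Rα : G → G → ℝ) (hR_nonneg : ∀ x y, 0 ≤ Rα x y)
    (hR_symm : ∀ x y, Rα x y = Rα y x)
    (c₁ c₂ : ℝ) (hc₁ : 0 < c₁) (hc₂ : 0 < c₂)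
    (hR_low : ∀ x y : G, x ≠ y → c₁ * (wordDist S x y : ℝ) ^ (α - (N : ℝ)) ≤ Rα x y)
    (hR_up : ∀ x y : G, x ≠ y → Rα x y ≤ c₂ * (wordDist S x y : ℝ) ^ (α - (N : ℝ)))
    (hR_diag : ∀ x : G, Rα x x ≤ c₂)
    (Ω : Set G) (p : ℝ) (hp : 1 ≤ p)
    (u : ℕ → G → ℝ) (v : G → ℝ)
    (hbdd : ∃ M : ℝ, ∀ n, Memlp (2 * (N : ℝ) * p / ((N : ℝ) + α)) (u n) ∧
      lpNorm (2 * (N : ℝ) * p / ((N : ℝ) + α)) (u n) ≤ M)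
    (hpt : ∀ x : G, Tendsto (fun n => u n x) atTop (𝓝 (v x))) :
    Tendsto (fun n =>
        (∑' x : Ω, conv Rα (fun y => |u n y| ^ p) (x : G) * |u n (x : G)| ^ p) -
          ∑' x : Ω, conv Rα (fun y => |u n y - v y| ^ p) (x : G) * |u n (x : G) - v (x : G)| ^ p)
      atTop (𝓝 (∑' x : Ω, conv Rα (fun y => |v y| ^ p) (x : G) * |v (x : G)| ^ p)) := by
  obtain ⟨M, hM⟩ := hbdd
  lift c₂ to ℝ≥0 using hc₂.le
  exact brezisLieb_nonlocal_general (ballGrowth_posWordDist hC₁ hgrowth)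
    (fun x y => by rw [posWordDist, wordDist_comm hS_sym, posWordDist]) hα hαN
    (nnnorm_le_mul_posWordDist_rpow hR_nonneg hR_up hR_diag) Ω (one_pos.trans_le hp) hM hpt

end Choquard
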